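/- arXiv:2404.16518 — 4 statements merged into one kernel-verified Lean document; each statement's English description precedes it below -/
import Mathlib

section
/- Let a, b be distinct letters and k ∈ ℕ. Let u_k = (ab)^k and v_k = (ba)^k (the k-fold concatenations of [a,b] and [b,a]). Then v_k = u_k.rotate 1, while u_k and v_k differ at every one of their 2k positions, i.e. card { j < 2k : u_k[j] ≠ v_k[j] } = 2k. -/
theorem aux_shift {B : Type*} (a b : B) (k : ℕ) :
    (List.replicate k [a, b]).flatten ++ [a] = a :: (List.replicate k [b, a]).flatten := by
  induction k with
  | zero => simp
  | succ k ih => simp [List.replicate_succ, ih]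

theorem aux_ne {B : Type*} (a b : B) (hab : a ≠ b) (k : ℕ) :
    ∀ j, j < 2 * k →
      (List.replicate k [a, b]).flatten[j]? ≠ (List.replicate k [b, a]).flatten[j]? := by
  induction k with
  | zero => intro j hj; omega
  | succ k ih =>
    intro j hj
    match j with
    | 0 => simpa [List.replicate_succ] using hab
    | 1 => simpa [List.replicate_succ] using hab.symm
    | j + 2 =>
      have h := ih j (by omega)
      simpa [List.replicate_succ] using h

theorem rotate_one_hamming_max {B : Type*} [DecidableEq B] (a b : B) (hab : a ≠ b)
    (k : ℕ) (u v : List B)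
    (hu : u = (List.replicate k [a, b]).flatten)
    (hv : v = (List.replicate k [b, a]).flatten) :
    v = u.rotate 1 ∧
      ((Finset.range (2 * k)).filter (fun j => u[j]? ≠ v[j]?)).card = 2 * k := by
  subst hu hv
  constructor
  · cases k with
    | zero => simp
    | succ k => simp [List.replicate_succ, aux_shift]
  · rw [Finset.filter_true_of_mem, Finset.card_range]
    intro j hj
    exact aux_ne a b hab k j (Finset.mem_range.mp hj)
end

section
/- Let a, b be distinct letters and let k ≥ 2. Let u = a · b^k · a (one a, then k copies of b, then a) and v = b · a · b^{k−1} · a. Then v is obtained from u by one adjacent transposition (swapping the first two letters), yet u is not a rotation of v (u and v are not conjugate, i.e. ¬ u.IsRotated v). -/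
theorem swap_not_conjugate {B : Type*} (a b : B) (hab : a ≠ b) (k : ℕ) (hk : 2 ≤ k)
    (u v : List B)
    (hu : u = [a] ++ List.replicate k b ++ [a])
    (hv : v = [b, a] ++ List.replicate (k - 1) b ++ [a]) :
    (∃ (x y : List B) (c d : B), u = x ++ c :: d :: y ∧ v = x ++ d :: c :: y) ∧
      ¬ u.IsRotated v := by
  obtain ⟨m, rfl⟩ : ∃ m, k = m + 2 := ⟨k - 2, by omega⟩
  refine ⟨⟨[], List.replicate (m + 1) b ++ [a], a, b, ?_, ?_⟩, ?_⟩
  · simp [hu, List.replicate_succ]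
  · simp [hv]
  intro h
  obtain ⟨n, hn, hr⟩ := List.isRotated_iff_mod.1 h.symm
  have hlv : v.length = m + 4 := by simp [hv]
  -- the letter of `v` at any position other than `1` and `m + 3` is `b`
  have key : ∀ i, i < m + 4 → v[i]? = some a → i = 1 ∨ i = m + 3 := by
    intro i hi hia
    by_contra! hcon
    apply hab
    rcases i with _ | _ | i
    · simpa [hv, eq_comm] using hia
    · omega
    · have h1 : i < m + 1 := by omega
      have h2 : v[i + 2]? = some b := by
        simp [hv, List.getElem?_append, h1]
      rw [h2] at hia
      exact (Option.some.inj hia).symm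
  have h0 : v[(0 + n) % (m + 4)]? = some a := by
    rw [← hlv, ← List.getElem?_rotate (by omega), hr, hu]
    simp
  have h1 : v[(m + 3 + n) % (m + 4)]? = some a := by
    rw [← hlv, ← List.getElem?_rotate (by omega), hr, hu]
    simp [List.getElem?_append]
  have k0 := key _ (Nat.mod_lt _ (by omega)) h0
  have k1 := key _ (Nat.mod_lt _ (by omega)) h1
  rw [hlv] at hn
  rcases (by omega : n = 0 ∨ n = m + 4 ∨ (0 < n ∧ n < m + 4)) with rfl | rfl | ⟨hp, hl⟩
  · simp at k0
  · simp at k0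
  · rw [Nat.mod_eq_of_lt (by omega)] at k0
    have e : m + 3 + n = (n - 1) + (m + 4) := by omega
    rw [e, Nat.add_mod_right, Nat.mod_eq_of_lt (by omega)] at k1
    omega
end

section
/- Let ∂ ∈ ℕ and let α₀, β₀, u, v, α₁, β₁ be words over an alphabet B such that |u| = |v|, |α₀| = |β₀| + ∂, |β₁| = |α₁| + ∂, and ∂ < |u|. Suppose the interior of (u,v) at delay ∂ differs, i.e. there exists an index j with j + ∂ < |u| and u[j] ≠ v[j + ∂]. Then for every i ∈ ℕ, the words w₁ = α₀ · u^i · α₁ and w₂ = β₀ · v^i · β₁ have equal length and differ in at least i positions: i ≤ card { p < |w₁| : w₁[p] ≠ w₂[p] }. -/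
theorem pump_get {B : Type*} (u : List B) (i k j : ℕ) (hk : k < i) (hj : j < u.length) :
    (List.replicate i u).flatten[k * u.length + j]? = u[j]? := by
  induction i generalizing k with
  | zero => omega
  | succ i ih =>
    rw [List.replicate_succ, List.flatten_cons]
    cases k with
    | zero =>
      rw [Nat.zero_mul, Nat.zero_add, List.getElem?_append_left hj]
    | succ k =>
      rw [Nat.succ_mul, List.getElem?_append_right (by omega), ← ih k (by omega)]
      congr 1
      omega

theorem pump_get_mid {B : Type*} (a u b : List B) (i k j p : ℕ) (hk : k < i)
    (hj : j < u.length) (hp : p = a.length + (k * u.length + j)) :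
    p < (a ++ (List.replicate i u).flatten ++ b).length ∧
    (a ++ (List.replicate i u).flatten ++ b)[p]? = u[j]? := by
  have h1 : (k + 1) * u.length ≤ i * u.length := Nat.mul_le_mul_right _ hk
  rw [Nat.succ_mul] at h1
  have h2 : (List.replicate i u).flatten.length = i * u.length := by simp
  refine ⟨by simp only [List.length_append, h2]; omega, ?_⟩
  rw [List.getElem?_append_left (by rw [List.length_append, h2]; omega),
    List.getElem?_append_right (by omega), ← pump_get u i k j hk hj]
  congr 1
  omega

theorem pumping_hamming_lower_bound {B : Type*} [DecidableEq B]
    (del : ℕ) (α₀ β₀ u v α₁ β₁ : List B)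
    (hlen : u.length = v.length)
    (hα : α₀.length = β₀.length + del)
    (hβ : β₁.length = α₁.length + del)
    (hdel : del < u.length)
    (hint : ∃ j : ℕ, j + del < u.length ∧ u[j]? ≠ v[j + del]?) :
    ∀ i : ℕ,
      (α₀ ++ (List.replicate i u).flatten ++ α₁).length =
        (β₀ ++ (List.replicate i v).flatten ++ β₁).length ∧
      i ≤ ((Finset.range (α₀ ++ (List.replicate i u).flatten ++ α₁).length).filter
            (fun p =>
              (α₀ ++ (List.replicate i u).flatten ++ α₁)[p]? ≠
              (β₀ ++ (List.replicate i v).flatten ++ β₁)[p]?)).card := by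
  obtain ⟨j, hj, hne⟩ := hint
  intro i
  refine ⟨by simp [hlen]; omega, ?_⟩
  have hinj : Function.Injective (fun k : ℕ => α₀.length + (k * u.length + j)) := by
    intro a b hab
    have h : a * u.length = b * u.length := by
      simp only at hab
      omega
    exact Nat.eq_of_mul_eq_mul_right (by omega) h
  calc i = ((Finset.range i).image (fun k : ℕ => α₀.length + (k * u.length + j))).card := by
        rw [Finset.card_image_of_injective _ hinj, Finset.card_range]
    _ ≤ _ := by
        apply Finset.card_le_card
        intro p hp
        obtain ⟨k, hk, rfl⟩ := Finset.mem_image.1 hp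
        have hk' := Finset.mem_range.1 hk
        obtain ⟨h1, h2⟩ := pump_get_mid α₀ u α₁ i k j _ hk' (by omega) rfl
        obtain ⟨-, h3⟩ := pump_get_mid β₀ v β₁ i k (j + del)
          (α₀.length + (k * u.length + j)) hk' (by omega) (by rw [hlen]; omega)
        rw [Finset.mem_filter, Finset.mem_range]
        refine ⟨h1, ?_⟩
        rw [h2, h3]
        exact hne
end

section
/- Let M be a deterministic finite automaton over an input alphabet A with a finite set of states, all of which are accessible (reachable from the start state by some input word) and co-accessible (some input word leads from them to an accepting state). Let λ₁, λ₂ assign to each state q and input letter a an output word λᵢ(q,a) over B, let out_i(w) denote the concatenation of the outputs λᵢ along the run of M from the start state on the word w, and let ο₁, ο₂ assign to each state a final output word. Then the following are equivalent: (1) there exists k ∈ ℕ such that for every word w accepted by M, | |out₁(w) · ο₁(eval w)| − |out₂(w) · ο₂(eval w)| | ≤ k, where eval w is the state M reaches on w; (2) there exists k ∈ ℕ such that for every word w accepted by M and every prefix u of w, | |out₁(u)| − |out₂(u)| | ≤ k. -/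
/-- The output word produced along the run of the DFA `M` from state `q`
on the input word `w`, using the transition-output function `lam`. -/
def outFrom {A B σ : Type*} (M : DFA A σ) (lam : σ → A → List B) :
    σ → List A → List B
  | _, [] => []
  | q, a :: w => lam q a ++ outFrom M lam (M.step q a) w

theorem outFrom_append_aux {A B σ : Type*} (M : DFA A σ) (lam : σ → A → List B)
    (u v : List A) : ∀ q : σ, outFrom M lam q (u ++ v) =
      outFrom M lam q u ++ outFrom M lam (M.evalFrom q u) v := by
  induction u with
  | nil => intro q; simp [outFrom]
  | cons a u ih => intro q; simp [outFrom, ih, DFA.evalFrom_cons]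

theorem exists_nat_bound_aux {σ : Type*} [Fintype σ] (f : σ → ℤ) :
    ∃ D : ℕ, ∀ q, |f q| ≤ (D : ℤ) := by
  refine ⟨∑ q, (f q).natAbs, fun q => ?_⟩
  have h := Finset.single_le_sum (f := fun q => (f q).natAbs)
    (fun i _ => Nat.zero_le _) (Finset.mem_univ q)
  rw [Int.abs_eq_natAbs]
  exact_mod_cast h

theorem bounded_length_distance_iff_bounded_delay
    {A B σ : Type*} [Fintype σ] (M : DFA A σ)
    (hacc : ∀ q : σ, ∃ w : List A, M.evalFrom M.start w = q)
    (hcoacc : ∀ q : σ, ∃ w : List A, M.evalFrom q w ∈ M.accept)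
    (lam₁ lam₂ : σ → A → List B) (omi₁ omi₂ : σ → List B) :
    (∃ k : ℕ, ∀ w : List A, M.eval w ∈ M.accept →
        |((outFrom M lam₁ M.start w ++ omi₁ (M.eval w)).length : ℤ) -
          ((outFrom M lam₂ M.start w ++ omi₂ (M.eval w)).length : ℤ)| ≤ (k : ℤ)) ↔
      (∃ k : ℕ, ∀ w : List A, M.eval w ∈ M.accept →
        ∀ u : List A, u <+: w →
          |((outFrom M lam₁ M.start u).length : ℤ) -
            ((outFrom M lam₂ M.start u).length : ℤ)| ≤ (k : ℤ)) := by
  constructor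
  · rintro ⟨k, hk⟩
    choose c hc using hcoacc
    obtain ⟨D, hD⟩ := exists_nat_bound_aux (fun q =>
      ((outFrom M lam₁ q (c q)).length : ℤ) + (omi₁ (M.evalFrom q (c q))).length
      - ((outFrom M lam₂ q (c q)).length + (omi₂ (M.evalFrom q (c q))).length))
    refine ⟨k + D, fun _ _ u _ => ?_⟩
    have he : M.eval (u ++ c (M.eval u)) = M.evalFrom (M.eval u) (c (M.eval u)) := by
      simp only [DFA.eval, DFA.evalFrom_of_append]
    have h1 := hk (u ++ c (M.eval u)) (by rw [he]; exact hc _)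
    have h2 := hD (M.eval u)
    rw [he, outFrom_append_aux, outFrom_append_aux] at h1
    change |_| ≤ _ at h2
    simp only [List.length_append, Nat.cast_add] at h1 ⊢
    change |(_ + ((outFrom M lam₁ (M.eval u) (c (M.eval u))).length : ℤ) + _) -
      (_ + ((outFrom M lam₂ (M.eval u) (c (M.eval u))).length : ℤ) + _)| ≤ _ at h1
    rw [abs_le] at *
    constructor <;> linarith [h1.1, h1.2, h2.1, h2.2]
  · rintro ⟨k, hk⟩
    obtain ⟨D, hD⟩ := exists_nat_bound_aux (fun q =>
      ((omi₁ q).length : ℤ) - (omi₂ q).length)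
    refine ⟨k + D, fun w hw => ?_⟩
    have h1 := hk w hw w (List.prefix_refl w)
    have h2 := hD (M.eval w)
    simp only [List.length_append, Nat.cast_add]
    rw [abs_le] at *
    constructor <;> linarith [h1.1, h1.2, h2.1, h2.2]
end
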